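/- Let G be a finite simple graph on a nonempty vertex set in which every vertex has degree at least 1. Then the Q-index of G satisfies q(G) ≤ max over vertices u of ( d(u) + (1/d(u)) · Σ_{v∼u} d(v) ). -/

import Mathlib

open Matrix

/-- The signless Laplacian `Q(G) = D(G) + A(G)` of a finite simple graph `G`. -/
noncomputable def signlessLaplacian {V : Type*} [Fintype V] (G : SimpleGraph V) :
    Matrix V V ℝ :=
  letI := Classical.decEq V
  letI : DecidableRel G.Adj := Classical.decRel _
  Matrix.diagonal (fun v => (G.degree v : ℝ)) + G.adjMatrix ℝ

/-- The `Q`-index of `G`: the largest eigenvalue of the signless Laplacian `Q(G)`. -/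
noncomputable def qIndex {V : Type*} [Fintype V] (G : SimpleGraph V) : ℝ :=
  letI := Classical.decEq V
  sSup (spectrum ℝ (signlessLaplacian G))

/-!
Conjugating the signless Laplacian `Q` by the diagonal matrix of a positive weight `w` preserves its
spectrum and turns row `u` into `d(u)` on the diagonal and `w(v) / w(u)` at each neighbour `v` of
`u`. Gershgorin's circle theorem then puts every eigenvalue below some
`d(u) + (1 / w(u)) ∑_{v ∼ u} w(v)`; the theorem is the choice `w = d`.
-/

section WeightedGershgorin

variable {K n : Type*} [Fintype n] [DecidableEq n]

theorem spectrum_diagonal_inv_mul_mul_diagonal [Field K] (A : Matrix n n K) {w : n → K}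
    (hw : ∀ i, w i ≠ 0) :
    spectrum K (diagonal (fun i => (w i)⁻¹) * A * diagonal w) = spectrum K A := by
  let W : (Matrix n n K)ˣ :=
    { val := diagonal w
      inv := diagonal fun i => (w i)⁻¹
      val_inv := by simp [diagonal_mul_diagonal, hw]
      inv_val := by simp [diagonal_mul_diagonal, hw] }
  exact spectrum.units_conjugate' (u := W)

theorem exists_mem_closedBall_weighted_of_mem_spectrum [NormedField K] {A : Matrix n n K} {μ : K}
    (hμ : μ ∈ spectrum K A) {w : n → K} (hw : ∀ i, w i ≠ 0) :
    ∃ k, μ ∈ Metric.closedBall (A k k)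
      (1 / ‖w k‖ * ∑ j ∈ Finset.univ.erase k, ‖A k j‖ * ‖w j‖) := by
  rw [← spectrum_diagonal_inv_mul_mul_diagonal A hw, ← spectrum_toLin',
    ← Module.End.hasEigenvalue_iff_mem_spectrum] at hμ
  obtain ⟨k, hk⟩ := eigenvalue_mem_ball hμ
  refine ⟨k, ?_⟩
  simpa only [mul_diagonal, diagonal_mul, norm_mul, norm_inv, mul_assoc, ← Finset.mul_sum,
    mul_comm (A k k), inv_mul_cancel_left₀ (hw k), one_div] using hk

end WeightedGershgorin

section SignlessLaplacian

variable {V : Type*} [Fintype V] (G : SimpleGraph V)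

theorem isHermitian_signlessLaplacian : (signlessLaplacian G).IsHermitian := by
  classical
  exact (isHermitian_diagonal _).add G.isSymm_adjMatrix

theorem qIndex_eq_sSup_spectrum [DecidableEq V] :
    qIndex G = sSup (spectrum ℝ (signlessLaplacian G)) := by
  unfold qIndex
  congr!

theorem spectrum_signlessLaplacian_nonempty [DecidableEq V] [Nonempty V] :
    (spectrum ℝ (signlessLaplacian G)).Nonempty := by
  rw [(isHermitian_signlessLaplacian G).spectrum_real_eq_range_eigenvalues]
  exact Set.range_nonempty _

variable [DecidableRel G.Adj]

theorem signlessLaplacian_eq_diagonal_add_adjMatrix [DecidableEq V] :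
    signlessLaplacian G = diagonal (fun v => (G.degree v : ℝ)) + G.adjMatrix ℝ := by
  unfold signlessLaplacian
  congr!

theorem signlessLaplacian_apply_self (u : V) : signlessLaplacian G u u = G.degree u := by
  classical
  simp [signlessLaplacian_eq_diagonal_add_adjMatrix]

theorem signlessLaplacian_apply_of_ne {u v : V} (huv : u ≠ v) :
    signlessLaplacian G u v = if G.Adj u v then 1 else 0 := by
  classical
  simp [signlessLaplacian_eq_diagonal_add_adjMatrix, huv]

theorem sum_erase_norm_signlessLaplacian_mul [DecidableEq V] (f : V → ℝ) (u : V) :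
    ∑ v ∈ Finset.univ.erase u, ‖signlessLaplacian G u v‖ * f v =
      ∑ v ∈ G.neighborFinset u, f v := by
  calc ∑ v ∈ Finset.univ.erase u, ‖signlessLaplacian G u v‖ * f v
      = ∑ v ∈ Finset.univ.erase u, if G.Adj u v then f v else 0 := by
        refine Finset.sum_congr rfl fun v hv => ?_
        rw [signlessLaplacian_apply_of_ne G (Finset.ne_of_mem_erase hv).symm]
        split_ifs <;> simp
    _ = ∑ v, if G.Adj u v then f v else 0 := Finset.sum_erase _ (if_neg G.irrefl)
    _ = ∑ v ∈ G.neighborFinset u, f v := by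
        rw [G.neighborFinset_eq_filter, Finset.sum_filter]

variable {G}

theorem exists_le_degree_add_of_mem_spectrum_signlessLaplacian [DecidableEq V] {μ : ℝ}
    (hμ : μ ∈ spectrum ℝ (signlessLaplacian G)) {w : V → ℝ} (hw : ∀ v, 0 < w v) :
    ∃ u, μ ≤ G.degree u + 1 / w u * ∑ v ∈ G.neighborFinset u, w v := by
  obtain ⟨u, hu⟩ := exists_mem_closedBall_weighted_of_mem_spectrum hμ fun v => (hw v).ne'
  simp only [sum_erase_norm_signlessLaplacian_mul, signlessLaplacian_apply_self,
    Real.norm_of_nonneg (hw _).le] at hu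
  rw [Real.closedBall_eq_Icc] at hu
  exact ⟨u, hu.2⟩

variable (G)

theorem qIndex_le_sup'_degree_add_weighted_sum [Nonempty V] {w : V → ℝ} (hw : ∀ v, 0 < w v) :
    qIndex G ≤ Finset.univ.sup' Finset.univ_nonempty
      (fun u => (G.degree u : ℝ) + 1 / w u * ∑ v ∈ G.neighborFinset u, w v) := by
  classical
  rw [qIndex_eq_sSup_spectrum]
  refine csSup_le (spectrum_signlessLaplacian_nonempty G) fun μ hμ => ?_
  obtain ⟨u, hu⟩ := exists_le_degree_add_of_mem_spectrum_signlessLaplacian hμ hw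
  exact Finset.le_sup'_of_le _ (Finset.mem_univ u) hu

end SignlessLaplacian

/-- `q(G) ≤ max_u ( d(u) + (1/d(u)) ∑_{v∼u} d(v) )` for graphs with
minimum degree at least `1`. -/
theorem stmt_18 {V : Type*} [Fintype V] [DecidableEq V] [Nonempty V]
    (G : SimpleGraph V) [DecidableRel G.Adj] (hdeg : ∀ v, 1 ≤ G.degree v) :
    qIndex G ≤ Finset.univ.sup' Finset.univ_nonempty
      (fun u => (G.degree u : ℝ) +
        (1 / (G.degree u : ℝ)) * ∑ v ∈ G.neighborFinset u, (G.degree v : ℝ)) :=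
  qIndex_le_sup'_degree_add_weighted_sum G fun v => Nat.cast_pos.mpr (hdeg v)
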